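/- arXiv:2005.10909 — 2 statements merged into one kernel-verified Lean document; each statement's English description precedes it below -/
import Mathlib

section
/- Let 1 ≤ p < +∞ and let f be analytic on the unit disc 𝔻. If lim_{ρ→1⁻} sup_{θ∈[0,2π]} (∫_ρ¹ |f'(re^{iθ})|^p (1-r)^p dr)^{1/p} = 0, then lim_{ρ→1⁻} sup_θ (1-ρ)^{1/p}|f(ρe^{iθ})| = 0 and f ∈ RM(p,0). -/
open MeasureTheory Metric Set Filter
open scoped ENNReal

/-- The point `r e^{iθ}` of the complex plane. -/
noncomputable def circ (r θ : ℝ) : ℂ := r * Complex.exp (θ * Complex.I)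

/-- The tail quantity `sup_θ (∫_ρ¹ |h(re^{iθ})|^p dr)^{1/p}` (with values in `ℝ≥0∞`). -/
noncomputable def tailSup (p : ℝ) (h : ℂ → ℂ) (ρ : ℝ) : ℝ≥0∞ :=
  ⨆ θ : ℝ, (∫⁻ r in Ioc ρ 1, ENNReal.ofReal (‖h (circ r θ)‖ ^ p)) ^ (1/p)

/-- `f` belongs to `RM(p,0)`: `f` is analytic on the unit disc and
`lim_{ρ→1⁻} sup_θ (∫_ρ¹ |f(re^{iθ})|^p dr)^{1/p} = 0`. -/
def memRMp0 (p : ℝ) (f : ℂ → ℂ) : Prop :=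
  DifferentiableOn ℂ f (ball (0:ℂ) 1) ∧
    Tendsto (tailSup p f) (nhdsWithin 1 (Iio (1:ℝ))) (nhds 0)

lemma aux_tendsto (g : ℝ → ℝ≥0∞) (l : Filter ℝ) (K : ℝ) (hK : 0 < K)
    (hg : ∀ ε : ℝ, 0 < ε → ∀ᶠ x in l, g x ≤ ENNReal.ofReal (K * ε)) :
    Tendsto g l (nhds 0) := by
  rw [ENNReal.tendsto_nhds_zero]
  intro e he
  by_cases het : e = ⊤
  · simp [het]
  have h0 : 0 < e.toReal := ENNReal.toReal_pos he.ne' het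
  filter_upwards [hg (e.toReal / K) (by positivity)] with x hx
  refine hx.trans ?_
  rw [mul_div_cancel₀ _ hK.ne', ENNReal.ofReal_toReal het]

lemma aux_young (p a b : ℝ) (hp : 1 ≤ p) (ha : 0 ≤ a) (hb : 0 ≤ b) :
    a * (p * b ^ (p - 1)) ≤ 1 / 2 * b ^ p + (2 * p) ^ p * a ^ p := by
  have hp0 : 0 < p := by linarith
  rw [← Real.mul_rpow (by positivity) ha]
  have key : ∀ x : ℝ, 0 ≤ x → x ^ p = x * x ^ (p - 1) := by
    intro x hx
    rcases hx.eq_or_lt with rfl | hx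
    · rw [Real.zero_rpow hp0.ne', zero_mul]
    · rw [Real.rpow_sub_one hx.ne']; field_simp
  rw [key b hb, key (2 * p * a) (by positivity)]
  have h1 : 0 ≤ b ^ (p - 1) := Real.rpow_nonneg hb _
  have h2 : 0 ≤ (2 * p * a) ^ (p - 1) := Real.rpow_nonneg (by positivity) _
  rcases le_total b (2 * p * a) with hc | hc
  · have := Real.rpow_le_rpow hb hc (by linarith : 0 ≤ p - 1)
    have h3 : a * p * b ^ (p - 1) ≤ a * p * (2 * p * a) ^ (p - 1) := by gcongr
    have h4 : 0 ≤ a * p * (2 * p * a) ^ (p - 1) := by positivity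
    have h5 : 0 ≤ b * b ^ (p - 1) := by positivity
    nlinarith
  · have h3 : 2 * p * a * b ^ (p - 1) ≤ b * b ^ (p - 1) := by gcongr
    have h4 : 0 ≤ 2 * p * a * (2 * p * a) ^ (p - 1) := by positivity
    nlinarith

lemma aux_hardy (p : ℝ) (hp : 1 ≤ p) (F : ℝ → ℝ) (hF : ContinuousOn F (Ioo (-1) 1))
    (hF0 : ∀ r, 0 ≤ F r) (ρ R c B : ℝ) (hρ : 0 ≤ ρ) (hρR : ρ ≤ R) (hR : R < 1) (hc : 0 ≤ c)
    (hB : ∫ r in ρ..R, F r ^ p * (1 - r) ^ p ≤ B) :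
    1 / 2 * (∫ r in ρ..R, (c + ∫ s in ρ..r, F s) ^ p) + (1 - R) * (c + ∫ s in ρ..R, F s) ^ p
      ≤ (1 - ρ) * c ^ p + (2 * p) ^ p * B := by
  have hp0 : 0 < p := by linarith
  have hsub : ∀ r ∈ Icc ρ R, uIcc ρ r ⊆ Ioo (-1) 1 := by
    intro r hr x hx
    rw [uIcc_of_le hr.1] at hx
    exact ⟨by linarith [hx.1], by linarith [hx.2, hr.2]⟩
  have hsub' : Icc ρ R ⊆ Ioo (-1) 1 := fun x hx => ⟨by linarith [hx.1], by linarith [hx.2]⟩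
  set u : ℝ → ℝ := fun r => c + ∫ s in ρ..r, F s with hu
  have hu0 : ∀ r ∈ Icc ρ R, 0 ≤ u r := fun r hr =>
    add_nonneg hc (intervalIntegral.integral_nonneg hr.1 fun x _ => hF0 x)
  have hud : ∀ r ∈ Icc ρ R, HasDerivAt u (F r) r := by
    intro r hr
    refine HasDerivAt.const_add c ?_
    exact intervalIntegral.integral_hasDerivAt_right
      ((hF.mono (hsub r hr)).intervalIntegrable)
      (hF.stronglyMeasurableAtFilter isOpen_Ioo r (hsub' hr))
      (hF.continuousAt (isOpen_Ioo.mem_nhds (hsub' hr)))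
  have huc : ContinuousOn u (Icc ρ R) := fun r hr => (hud r hr).continuousAt.continuousWithinAt
  have hFc : ContinuousOn F (Icc ρ R) := hF.mono hsub'
  have hGd : ∀ r ∈ Icc ρ R, HasDerivAt (fun r => (1 - r) * u r ^ p)
      ((-1) * u r ^ p + (1 - r) * (F r * p * u r ^ (p - 1))) r := by
    intro r hr
    exact ((hasDerivAt_id r).const_sub 1).mul ((hud r hr).rpow_const (Or.inr hp))
  have hupc : ContinuousOn (fun r => u r ^ p) (Icc ρ R) :=
    huc.rpow_const fun _ _ => Or.inr hp0.le
  have hup1c : ContinuousOn (fun r => u r ^ (p - 1)) (Icc ρ R) :=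
    huc.rpow_const fun _ _ => Or.inr (by linarith)
  have hlin : ContinuousOn (fun r : ℝ => 1 - r) (Icc ρ R) := by fun_prop
  have hFp : ContinuousOn (fun r => F r ^ p * (1 - r) ^ p) (Icc ρ R) :=
    (hFc.rpow_const fun _ _ => Or.inr hp0.le).mul (hlin.rpow_const fun _ _ => Or.inr hp0.le)
  have hGi : IntervalIntegrable
      (fun r => (-1) * u r ^ p + (1 - r) * (F r * p * u r ^ (p - 1))) volume ρ R := by
    apply ContinuousOn.intervalIntegrable
    rw [uIcc_of_le hρR]
    exact (continuousOn_const.mul hupc).add (hlin.mul ((hFc.mul continuousOn_const).mul hup1c))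
  have hi1 : IntervalIntegrable (fun r => u r ^ p) volume ρ R :=
    ContinuousOn.intervalIntegrable (by rwa [uIcc_of_le hρR])
  have hi2 : IntervalIntegrable (fun r => F r ^ p * (1 - r) ^ p) volume ρ R :=
    ContinuousOn.intervalIntegrable (by rwa [uIcc_of_le hρR])
  have hftc := intervalIntegral.integral_eq_sub_of_hasDerivAt
    (fun r hr => hGd r (by rwa [uIcc_of_le hρR] at hr)) hGi
  have hle : ∫ r in ρ..R, ((-1) * u r ^ p + (1 - r) * (F r * p * u r ^ (p - 1)))
      ≤ ∫ r in ρ..R, ((-(1 / 2)) * u r ^ p + (2 * p) ^ p * (F r ^ p * (1 - r) ^ p)) := by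
    refine intervalIntegral.integral_mono_on hρR hGi
      ((hi1.const_mul _).add (hi2.const_mul _)) ?_
    intro r hr
    have h1r : 0 ≤ 1 - r := by linarith [hr.2]
    have := aux_young p (F r * (1 - r)) (u r) hp (mul_nonneg (hF0 r) h1r) (hu0 r hr)
    rw [Real.mul_rpow (hF0 r) h1r] at this
    nlinarith
  rw [hftc, intervalIntegral.integral_add (hi1.const_mul _) (hi2.const_mul _),
    intervalIntegral.integral_const_mul, intervalIntegral.integral_const_mul] at hle
  have huρ : u ρ = c := by simp [hu]
  rw [huρ] at hle
  have h2 : (2 * p) ^ p * (∫ r in ρ..R, F r ^ p * (1 - r) ^ p) ≤ (2 * p) ^ p * B :=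
    mul_le_mul_of_nonneg_left hB (by positivity)
  have h3 : u R = c + ∫ s in ρ..R, F s := rfl
  rw [← h3]
  linarith

lemma circ_norm (r θ : ℝ) : ‖circ r θ‖ = |r| := by
  simp [circ, Complex.norm_exp_ofReal_mul_I]

lemma circ_cont (θ : ℝ) : Continuous fun r : ℝ => circ r θ := by
  unfold circ; fun_prop

lemma circ_mem {r : ℝ} (θ : ℝ) (hr : r ∈ Ioo (-1 : ℝ) 1) : circ r θ ∈ ball (0 : ℂ) 1 := by
  rw [mem_ball_zero_iff, circ_norm, abs_lt]; exact hr

lemma aux_contF (f : ℂ → ℂ) (hf : DifferentiableOn ℂ f (ball (0:ℂ) 1)) (θ : ℝ) :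
    ContinuousOn (fun r => deriv f (circ r θ)) (Ioo (-1) 1) :=
  ((hf.deriv isOpen_ball).continuousOn).comp (circ_cont θ).continuousOn
    fun _ hr => circ_mem θ hr

lemma aux_growth (f : ℂ → ℂ) (hf : DifferentiableOn ℂ f (ball (0:ℂ) 1)) (θ ρ r : ℝ)
    (hρ : 0 ≤ ρ) (hr : ρ ≤ r) (hr1 : r < 1) :
    ‖f (circ r θ)‖ ≤ ‖f (circ ρ θ)‖ + ∫ s in ρ..r, ‖deriv f (circ s θ)‖ := by
  have hsub : uIcc ρ r ⊆ Ioo (-1) 1 := by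
    intro x hx
    rw [uIcc_of_le hr] at hx
    exact ⟨by linarith [hx.1], by linarith [hx.2]⟩
  have hd : ∀ x ∈ uIcc ρ r, HasDerivAt (fun s : ℝ => f (circ s θ))
      (deriv f (circ x θ) * Complex.exp (θ * Complex.I)) x := by
    intro x hx
    have h1 : HasDerivAt f (deriv f (circ x θ)) (circ x θ) :=
      (hf.differentiableAt (isOpen_ball.mem_nhds (circ_mem θ (hsub hx)))).hasDerivAt
    have h2 : HasDerivAt (fun s : ℝ => circ s θ) (Complex.exp (θ * Complex.I)) x := by
      have := (Complex.ofRealCLM.hasDerivAt (x := x)).mul_const (Complex.exp (θ * Complex.I))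
      simpa [circ] using this
    exact h1.comp x h2
  have hi := intervalIntegral.integral_eq_sub_of_hasDerivAt hd
    ((((aux_contF f hf θ).mono hsub).mul continuousOn_const).intervalIntegrable)
  have hn := intervalIntegral.norm_integral_le_integral_norm (μ := volume)
    (f := fun x => deriv f (circ x θ) * Complex.exp (θ * Complex.I)) hr
  rw [hi] at hn
  simp only [norm_mul, Complex.norm_exp_ofReal_mul_I, mul_one] at hn
  have := norm_sub_norm_le (f (circ r θ)) (f (circ ρ θ))
  linarith

/-- Converting the hypothesis to real integrals. -/
lemma aux_hyp (p : ℝ) (hp : 1 ≤ p) (f : ℂ → ℂ) (hf : DifferentiableOn ℂ f (ball (0:ℂ) 1))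
    (ρ ε : ℝ) (hε : 0 < ε) (hρ : 0 ≤ ρ)
    (h : (⨆ θ : ℝ, (∫⁻ r in Ioc ρ 1,
      ENNReal.ofReal (‖deriv f (circ r θ)‖ ^ p * (1-r) ^ p)) ^ (1/p)) ≤ ENNReal.ofReal ε)
    (θ R : ℝ) (hρR : ρ ≤ R) (hR : R < 1) :
    ∫ r in ρ..R, ‖deriv f (circ r θ)‖ ^ p * (1 - r) ^ p ≤ ε ^ p := by
  have hp0 : 0 < p := by linarith
  have h1 := (le_iSup (fun θ : ℝ => (∫⁻ r in Ioc ρ 1,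
      ENNReal.ofReal (‖deriv f (circ r θ)‖ ^ p * (1-r) ^ p)) ^ (1/p)) θ).trans h
  rw [one_div, ENNReal.rpow_inv_le_iff hp0, ENNReal.ofReal_rpow_of_pos hε] at h1
  have hsub' : Icc ρ R ⊆ Ioo (-1) 1 := fun x hx => ⟨by linarith [hx.1], by linarith [hx.2]⟩
  have hFp : ContinuousOn (fun r => ‖deriv f (circ r θ)‖ ^ p * (1 - r) ^ p) (Icc ρ R) :=
    ((((aux_contF f hf θ).mono hsub').norm).rpow_const fun _ _ => Or.inr hp0.le).mul
      (ContinuousOn.rpow_const (by fun_prop) fun _ _ => Or.inr hp0.le)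
  rw [intervalIntegral.integral_of_le hρR]
  rw [← ENNReal.ofReal_le_ofReal_iff (by positivity), ofReal_integral_eq_lintegral_ofReal]
  · exact (lintegral_mono_set (Ioc_subset_Ioc_right hR.le)).trans h1
  · exact hFp.integrableOn_Icc.mono_set Ioc_subset_Icc_self
  · filter_upwards [ae_restrict_mem measurableSet_Ioc] with r hr
    have : 0 ≤ 1 - r := by linarith [hr.2]
    exact mul_nonneg (by positivity) (Real.rpow_nonneg this _)

/-- Exhaustion of the radius. -/
lemma aux_exhaust (g : ℝ → ℝ≥0∞) (ρ : ℝ) (C : ℝ≥0∞)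
    (hg : ∀ R, ρ ≤ R → R < 1 → ∫⁻ r in Ioc ρ R, g r ≤ C) :
    ∫⁻ r in Ioc ρ 1, g r ≤ C := by
  by_cases hρ : ρ < 1
  swap
  · simp [Ioc_eq_empty hρ]
  rw [← restrict_Ioo_eq_restrict_Ioc]
  obtain ⟨v, hvm, hv, hvt⟩ := exists_seq_strictMono_tendsto' hρ
  have hU : Ioo ρ 1 ⊆ ⋃ n, Ioc ρ (v n) := by
    intro x hx
    obtain ⟨n, hn⟩ := (hvt.eventually (lt_mem_nhds hx.2)).exists
    exact mem_iUnion.2 ⟨n, hx.1, hn.le⟩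
  refine (lintegral_mono_set hU).trans ?_
  rw [setLIntegral_iUnion_of_directed]
  · exact iSup_le fun n => hg _ (hv n).1.le (hv n).2
  · exact Monotone.directed_le fun a b hab => Ioc_subset_Ioc_right (hvm.monotone hab)

theorem stmt3 (p : ℝ) (hp : 1 ≤ p) (f : ℂ → ℂ)
    (hf : DifferentiableOn ℂ f (ball (0:ℂ) 1))
    (h : Tendsto
      (fun ρ : ℝ => ⨆ θ : ℝ,
        (∫⁻ r in Ioc ρ 1, ENNReal.ofReal (‖deriv f (circ r θ)‖ ^ p * (1-r) ^ p)) ^ (1/p))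
      (nhdsWithin 1 (Iio (1:ℝ))) (nhds 0)) :
    Tendsto (fun ρ : ℝ => ⨆ θ : ℝ, ENNReal.ofReal ((1-ρ) ^ (1/p) * ‖f (circ ρ θ)‖))
        (nhdsWithin 1 (Iio (1:ℝ))) (nhds 0) ∧
      memRMp0 p f := by
  have hp0 : 0 < p := by linarith
  have hnear : ∀ a : ℝ, a < 1 → ∀ᶠ ρ in nhdsWithin 1 (Iio (1:ℝ)), a < ρ ∧ ρ < 1 := by
    intro a ha
    filter_upwards [Ioo_mem_nhdsLT ha] with x hx using hx
  have hev : ∀ ε : ℝ, 0 < ε → ∀ᶠ ρ in nhdsWithin 1 (Iio (1:ℝ)), (⨆ θ : ℝ,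
      (∫⁻ r in Ioc ρ 1, ENNReal.ofReal (‖deriv f (circ r θ)‖ ^ p * (1-r) ^ p)) ^ (1/p))
      ≤ ENNReal.ofReal ε := fun ε hε =>
    (ENNReal.tendsto_nhds_zero.1 h) _ (ENNReal.ofReal_pos.2 hε)
  have hroot : ∀ ε : ℝ, 0 < ε → ∀ᶠ ρ in nhdsWithin 1 (Iio (1:ℝ)),
      ∀ θ : ℝ, (1-ρ) ^ (1/p) * ‖f (circ ρ θ)‖ ≤ (2 * p + 1) * ε := by
    intro ε hε
    obtain ⟨ρ₀, hρ₀, hρ₀0, hρ₀1⟩ := ((hev ε hε).and (hnear 0 one_pos)).exists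
    obtain ⟨M, hM⟩ := (isCompact_closedBall (0:ℂ) ρ₀).exists_bound_of_continuousOn
      (hf.continuousOn.mono (closedBall_subset_ball hρ₀1))
    have hlim : Tendsto (fun ρ : ℝ => (1-ρ) ^ (1/p) * M) (nhdsWithin 1 (Iio (1:ℝ))) (nhds 0) := by
      have hc : Continuous fun ρ : ℝ => (1-ρ) ^ (1/p) * M :=
        (Continuous.rpow_const (by fun_prop) fun _ => Or.inr (by positivity)).mul
          continuous_const
      have := (hc.tendsto 1).mono_left (nhdsWithin_le_nhds (s := Iio (1:ℝ)))
      simpa [Real.zero_rpow (inv_ne_zero hp0.ne')] using this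
    filter_upwards [hnear ρ₀ hρ₀1, hlim.eventually (gt_mem_nhds hε)] with R hR hRM θ
    have hB := aux_hyp p hp f hf ρ₀ ε hε hρ₀0.le hρ₀ θ R hR.1.le hR.2
    have hH := aux_hardy p hp (fun r => ‖deriv f (circ r θ)‖) (aux_contF f hf θ).norm
      (fun _ => norm_nonneg _) ρ₀ R 0 _ hρ₀0.le hR.1.le hR.2 le_rfl hB
    have hg := aux_growth f hf θ ρ₀ R hρ₀0.le hR.1.le hR.2
    have hMθ : ‖f (circ ρ₀ θ)‖ ≤ M := hM _ (by
      rw [mem_closedBall_zero_iff, circ_norm, abs_of_pos hρ₀0])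
    simp only [zero_add, Real.zero_rpow hp0.ne', mul_zero] at hH
    set I := ∫ s in ρ₀..R, ‖deriv f (circ s θ)‖ with hI
    have hI0 : 0 ≤ I := intervalIntegral.integral_nonneg hR.1.le fun _ _ => norm_nonneg _
    have hJ0 : 0 ≤ ∫ r in ρ₀..R, (∫ s in ρ₀..r, ‖deriv f (circ s θ)‖) ^ p :=
      intervalIntegral.integral_nonneg hR.1.le fun x hx => Real.rpow_nonneg
        (intervalIntegral.integral_nonneg hx.1 fun _ _ => norm_nonneg _) _
    have h1R : 0 ≤ 1 - R := by linarith [hR.2]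
    have hw : 0 ≤ (1 - R) ^ (1/p) := Real.rpow_nonneg h1R _
    have hb : (1 - R) ^ (1/p) * I ≤ 2 * p * ε := by
      rw [← Real.rpow_le_rpow_iff (by positivity) (by positivity) hp0,
        Real.mul_rpow hw hI0, Real.mul_rpow (by positivity) hε.le, ← Real.rpow_mul h1R,
        one_div_mul_cancel hp0.ne', Real.rpow_one]
      linarith
    calc (1-R) ^ (1/p) * ‖f (circ R θ)‖ ≤ (1-R) ^ (1/p) * (M + I) := by gcongr; linarith
      _ ≤ _ := by linarith
  refine ⟨?_, hf, ?_⟩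
  · refine aux_tendsto _ _ (2 * p + 1) (by positivity) fun ε hε => ?_
    filter_upwards [hroot ε hε] with ρ hρ
    exact iSup_le fun θ => ENNReal.ofReal_le_ofReal (hρ θ)
  · set K : ℝ := 2 * ((2 * p + 1) ^ p + (2 * p) ^ p) with hK
    have hK0 : 0 < K := by positivity
    refine aux_tendsto _ _ (K ^ (1/p)) (by positivity) fun ε hε => ?_
    filter_upwards [hroot ε hε, hev ε hε, hnear 0 one_pos] with ρ h1 h2 h3
    refine iSup_le fun θ => ?_
    have hKε : ENNReal.ofReal (K ^ (1/p) * ε) = ENNReal.ofReal (K * ε ^ p) ^ (1/p) := by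
      rw [ENNReal.ofReal_rpow_of_nonneg (by positivity) (by positivity),
        Real.mul_rpow hK0.le (by positivity), ← Real.rpow_mul hε.le,
        mul_one_div_cancel hp0.ne', Real.rpow_one]
    rw [hKε]
    refine ENNReal.rpow_le_rpow ?_ (by positivity)
    refine aux_exhaust _ _ _ fun R hρR hR => ?_
    have hB := aux_hyp p hp f hf ρ ε hε h3.1.le h2 θ R hρR hR
    have hH := aux_hardy p hp (fun r => ‖deriv f (circ r θ)‖) (aux_contF f hf θ).norm
      (fun _ => norm_nonneg _) ρ R ‖f (circ ρ θ)‖ _ h3.1.le hρR hR (norm_nonneg _) hB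
    have hsub' : Icc ρ R ⊆ Ioo (-1) 1 :=
      fun x hx => ⟨by linarith [hx.1, h3.1], by linarith [hx.2]⟩
    have h1ρ : 0 ≤ 1 - ρ := by linarith [h3.2]
    have hs : (1 - ρ) * ‖f (circ ρ θ)‖ ^ p ≤ (2 * p + 1) ^ p * ε ^ p := by
      have := Real.rpow_le_rpow (by positivity) (h1 θ) hp0.le
      rwa [Real.mul_rpow (by positivity) (norm_nonneg _), Real.mul_rpow (by positivity) hε.le,
        ← Real.rpow_mul h1ρ, one_div_mul_cancel hp0.ne', Real.rpow_one] at this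
    have hfc : ContinuousOn (fun r => ‖f (circ r θ)‖ ^ p) (Icc ρ R) :=
      ((hf.continuousOn.comp (circ_cont θ).continuousOn
        fun x hx => circ_mem θ (hsub' hx)).norm).rpow_const fun _ _ => Or.inr hp0.le
    have hprim : ContinuousOn (fun r => ∫ s in ρ..r, ‖deriv f (circ s θ)‖) (uIcc ρ R) :=
      intervalIntegral.continuousOn_primitive_interval
        (by rw [uIcc_of_le hρR]; exact ((aux_contF f hf θ).norm.mono hsub').integrableOn_Icc)
    have hmono : ∫ r in ρ..R, ‖f (circ r θ)‖ ^ p ≤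
        ∫ r in ρ..R, (‖f (circ ρ θ)‖ + ∫ s in ρ..r, ‖deriv f (circ s θ)‖) ^ p := by
      refine intervalIntegral.integral_mono_on hρR ?_ ?_ ?_
      · exact ContinuousOn.intervalIntegrable (by rwa [uIcc_of_le hρR])
      · exact ((continuousOn_const.add hprim).rpow_const
          fun _ _ => Or.inr hp0.le).intervalIntegrable
      · intro r hr
        exact Real.rpow_le_rpow (norm_nonneg _)
          (aux_growth f hf θ ρ r h3.1.le hr.1 (hr.2.trans_lt hR)) hp0.le
    have hlast : 0 ≤ (1 - R) * (‖f (circ ρ θ)‖ + ∫ s in ρ..R, ‖deriv f (circ s θ)‖) ^ p :=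
      mul_nonneg (by linarith) (Real.rpow_nonneg (add_nonneg (norm_nonneg _)
        (intervalIntegral.integral_nonneg hρR fun _ _ => norm_nonneg _)) _)
    have hfin : ∫ r in ρ..R, ‖f (circ r θ)‖ ^ p ≤ K * ε ^ p := by
      rw [hK]; linarith
    rw [intervalIntegral.integral_of_le hρR, ← ENNReal.ofReal_le_ofReal_iff (by positivity),
      ofReal_integral_eq_lintegral_ofReal (hfc.integrableOn_Icc.mono_set Ioc_subset_Icc_self)
        (Eventually.of_forall fun r => by positivity)] at hfin
    exact hfin
end

section
/- Let X be a complex Banach space, let μ be a positive finite measure on a measurable space Ω, and let T : X → L¹(μ) be a bounded linear operator. If T is not weakly compact (i.e. the image T(B_X) of the closed unit ball B_X of X is not relatively compact in the weak topology of L¹(μ)), then T fixes a copy of ℓ¹: there exist a sequence {x_n} in B_X and a constant δ > 0 such that for every n and all complex scalars α₁,…,α_n one has δ·Σ_{k=1}^n |α_k| ≤ ‖T(Σ_{k=1}^n α_k x_k)‖_{L¹(μ)}. -/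
open MeasureTheory Metric

open scoped Pointwise in
theorem weak_compact_of_approx {E H : Type*} [NormedAddCommGroup E] [NormedSpace ℂ E]
    [CompleteSpace E] [NormedAddCommGroup H] [InnerProductSpace ℂ H] [CompleteSpace H]
    (ι : H →L[ℂ] E) (S : Set E) (hb : Bornology.IsBounded S)
    (h : ∀ ε > 0, ∃ R : ℝ, ∀ f ∈ S, ∃ v ∈ closedBall (0:H) R, ‖f - ι v‖ ≤ ε) :
    IsCompact (closure (toWeakSpace ℂ E '' S)) := by
  apply NormedSpace.isCompact_closure_of_isBounded
  · convert hb
    exact Set.preimage_image_eq _ (toWeakSpace ℂ E).injective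
  · intro ψ hψ
    have hcl : IsClosed (Set.range (NormedSpace.inclusionInDoubleDualLi ℂ (E := E))) :=
      (NormedSpace.inclusionInDoubleDualLi ℂ (E := E)).isometry.isUniformInducing.isComplete_range.isClosed
    have hmem : WeakDual.toStrongDual ψ ∈
        Set.range (NormedSpace.inclusionInDoubleDualLi ℂ (E := E)) := by
      rw [← hcl.closure_eq]
      refine (Metric.mem_closure_iff (α := StrongDual ℂ (StrongDual ℂ E))).2 ?_
      intro ε hε
      obtain ⟨R, hR⟩ := h (ε / 2) (by positivity)
      let G : WeakDual ℂ H → WeakDual ℂ (StrongDual ℂ E) := fun φ =>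
        NormedSpace.inclusionInDoubleDualWeak ℂ E
          (toWeakSpace ℂ E (ι ((InnerProductSpace.toDual ℂ H).symm (WeakDual.toStrongDual φ))))
      have hG : Continuous G := by
        apply WeakDual.continuous_of_continuous_eval
        intro l
        let w := (InnerProductSpace.toDual ℂ H).symm (l ∘L ι)
        have : ∀ φ : WeakDual ℂ H, G φ l = star (φ w) := by
          intro φ
          have h1 : G φ l = (l ∘L ι)
            ((InnerProductSpace.toDual ℂ H).symm (WeakDual.toStrongDual φ)) := rfl
          rw [h1, ← InnerProductSpace.toDual_symm_apply, ← inner_conj_symm,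
            InnerProductSpace.toDual_symm_apply]
          rfl
        simp only [this]
        exact (WeakDual.eval_continuous w).star
      have hc1 : IsCompact (G '' (WeakDual.toStrongDual ⁻¹' closedBall 0 R)) :=
        (WeakDual.isCompact_closedBall 0 R).image hG
      have hc2 : IsCompact (WeakDual.toStrongDual ⁻¹'
          closedBall (0 : StrongDual ℂ (StrongDual ℂ E)) (ε/2)) :=
        WeakDual.isCompact_closedBall 0 (ε/2)
      have hc := (hc1.add hc2).isClosed
      have hsub : NormedSpace.inclusionInDoubleDualWeak ℂ E '' (toWeakSpace ℂ E '' S) ⊆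
          (G '' (WeakDual.toStrongDual ⁻¹' closedBall 0 R)) + (WeakDual.toStrongDual ⁻¹'
          closedBall (0 : StrongDual ℂ (StrongDual ℂ E)) (ε/2)) := by
        rintro _ ⟨_, ⟨f, hf, rfl⟩, rfl⟩
        obtain ⟨v, hv, hfv⟩ := hR f hf
        refine Set.mem_add.2 ⟨_, ⟨StrongDual.toWeakDual (InnerProductSpace.toDual ℂ H v), ?_, rfl⟩,
          NormedSpace.inclusionInDoubleDualWeak ℂ E (toWeakSpace ℂ E (f - ι v)), ?_, ?_⟩
        · simpa using hv
        · refine (mem_closedBall_zero_iff (E := StrongDual ℂ (StrongDual ℂ E))).2 ?_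
          exact (NormedSpace.double_dual_bound ℂ E (f - ι v)).trans hfv
        · simp [G]
      obtain ⟨_, ⟨φ, hφ, rfl⟩, r, hr, hsum⟩ := Set.mem_add.1 (closure_minimal hsub hc hψ)
      refine ⟨_, ⟨ι ((InnerProductSpace.toDual ℂ H).symm (WeakDual.toStrongDual φ)), rfl⟩, ?_⟩
      have : WeakDual.toStrongDual ψ = NormedSpace.inclusionInDoubleDualLi ℂ (E := E)
          (ι ((InnerProductSpace.toDual ℂ H).symm (WeakDual.toStrongDual φ)))
          + WeakDual.toStrongDual r := by
        rw [← hsum, map_add]; rfl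
      have h2 : ‖WeakDual.toStrongDual r‖ ≤ ε / 2 :=
        (mem_closedBall_zero_iff (E := StrongDual ℂ (StrongDual ℂ E))).1 hr
      rw [this]
      refine (dist_eq_norm (E := StrongDual ℂ (StrongDual ℂ E)) _ _).trans_lt ?_
      refine (congrArg (fun z : StrongDual ℂ (StrongDual ℂ E) => ‖z‖)
        (add_sub_cancel_left (G := StrongDual ℂ (StrongDual ℂ E)) _ _)).trans_lt ?_
      exact h2.trans_lt (half_lt_self hε)
    obtain ⟨f, hf⟩ := hmem
    refine ⟨toWeakSpace ℂ E f, ?_⟩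
    exact WeakDual.toStrongDual.injective hf

theorem exists_l2_l1 {Ω : Type*} [MeasurableSpace Ω] (μ : Measure Ω) [IsFiniteMeasure μ] :
    ∃ ι : Lp ℂ 2 μ →L[ℂ] Lp ℂ 1 μ, ∀ v : Lp ℂ 2 μ, ι v =ᵐ[μ] v := by
  have h12 : (1 : ENNReal) ≤ 2 := by norm_num
  refine ⟨LinearMap.mkContinuous
    { toFun := fun v => ((Lp.memLp v).mono_exponent h12).toLp v
      map_add' := ?_
      map_smul' := ?_ } (μ.real Set.univ ^ (1/2 : ℝ)) ?_, ?_⟩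
  · intro u v
    ext
    filter_upwards [MemLp.coeFn_toLp ((Lp.memLp (u+v)).mono_exponent h12),
      MemLp.coeFn_toLp ((Lp.memLp u).mono_exponent h12),
      MemLp.coeFn_toLp ((Lp.memLp v).mono_exponent h12), Lp.coeFn_add u v,
      Lp.coeFn_add (((Lp.memLp u).mono_exponent h12).toLp u)
      (((Lp.memLp v).mono_exponent h12).toLp v)] with x h1 h2 h3 h4 h5
    rw [h1, h5, h4]; simp [h2, h3]
  · intro c v
    ext
    filter_upwards [MemLp.coeFn_toLp ((Lp.memLp (c • v)).mono_exponent h12),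
      MemLp.coeFn_toLp ((Lp.memLp v).mono_exponent h12), Lp.coeFn_smul c v,
      Lp.coeFn_smul c (((Lp.memLp v).mono_exponent h12).toLp v)] with x h1 h3 h4 h5
    simp only [RingHom.id_apply]
    rw [h1, h5, h4]; simp [h3]
  · intro v
    simp only [LinearMap.coe_mk, AddHom.coe_mk, Lp.norm_toLp]
    have := eLpNorm_le_eLpNorm_mul_rpow_measure_univ h12 (Lp.memLp v).1
    rw [Lp.norm_def]
    refine (ENNReal.toReal_mono ?_ this).trans (le_of_eq ?_)
    · exact ENNReal.mul_ne_top (Lp.eLpNorm_ne_top v) (by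
        apply ENNReal.rpow_ne_top_of_nonneg (by norm_num) (measure_ne_top μ _))
    · rw [ENNReal.toReal_mul, ← ENNReal.toReal_rpow, mul_comm]
      norm_num [Measure.real]
  · intro v
    exact MemLp.coeFn_toLp ((Lp.memLp v).mono_exponent h12)

theorem weak_compact_of_ui {Ω : Type*} [MeasurableSpace Ω] (μ : Measure Ω) [IsFiniteMeasure μ]
    (K : Set (Lp ℂ 1 μ)) (C : ℝ) (hC : ∀ f ∈ K, ‖f‖ ≤ C)
    (hui : ∀ ε > 0, ∃ δ > 0, ∀ f ∈ K, ∀ A, MeasurableSet A → μ.real A ≤ δ →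
      ∫ x in A, ‖f x‖ ∂μ ≤ ε) :
    IsCompact (closure (toWeakSpace ℂ (Lp ℂ 1 μ) '' K)) := by
  obtain ⟨ι, hι⟩ := exists_l2_l1 μ
  refine weak_compact_of_approx ι K (isBounded_iff_forall_norm_le.2 ⟨C, hC⟩) ?_
  intro ε hε
  obtain ⟨δ, hδ, hu⟩ := hui ε hε
  let M : ℝ := (|C| + 1) / δ
  have hM : 0 < M := by positivity
  refine ⟨(μ.real Set.univ) ^ (1/2:ℝ) * M, fun f hf => ?_⟩
  have hfm : StronglyMeasurable f := Lp.stronglyMeasurable f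
  have hfi : Integrable f μ := L1.integrable_coeFn f
  let A : Set Ω := {x | M < ‖f x‖}
  have hA : MeasurableSet A := measurableSet_lt measurable_const hfm.norm.measurable
  have hnorm : ‖f‖ = ∫ x, ‖f x‖ ∂μ := L1.norm_eq_integral_norm f
  have hμA : μ.real A ≤ δ := by
    have h1 := mul_meas_ge_le_integral_of_nonneg (μ := μ) (f := fun x => ‖f x‖)
      (Filter.Eventually.of_forall fun x => norm_nonneg _) hfi.norm M
    have h2 : μ.real A ≤ μ.real {x | M ≤ ‖f x‖} :=
      measureReal_mono (fun x (hx : M < ‖f x‖) => hx.le)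
    have h3 : M * μ.real A ≤ |C| + 1 := by
      have := hC f hf
      have := le_abs_self C
      have := mul_le_mul_of_nonneg_left h2 hM.le
      linarith
    have h4 : |C| + 1 = M * δ := by simp only [M]; field_simp
    rw [h4] at h3
    exact le_of_mul_le_mul_left h3 hM
  let g : Ω → ℂ := Aᶜ.indicator f
  have hgm : AEStronglyMeasurable g μ := (hfm.indicator hA.compl).aestronglyMeasurable
  have hgb : ∀ x, ‖g x‖ ≤ M := by
    intro x
    by_cases hx : x ∈ A
    · simp [g, hx, hM.le]
    · simpa [g, hx] using (not_lt.1 hx)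
  have hg : MemLp g 2 μ := MemLp.of_bound hgm M (Filter.Eventually.of_forall hgb)
  refine ⟨hg.toLp g, ?_, ?_⟩
  · rw [mem_closedBall, dist_zero_right]
    have h5 := Lp.norm_le_of_ae_bound (f := hg.toLp g) hM.le (by
      filter_upwards [hg.coeFn_toLp] with x hx
      rw [hx]; exact hgb x)
    refine h5.trans (le_of_eq ?_)
    norm_num [measureUnivNNReal, Measure.real]
    left; rfl
  · rw [L1.norm_eq_integral_norm]
    refine le_trans (le_of_eq ?_) (hu f hf A hA hμA)
    rw [← integral_indicator hA]
    apply integral_congr_ae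
    filter_upwards [Lp.coeFn_sub f (ι (hg.toLp g)), hι (hg.toLp g), hg.coeFn_toLp] with x h1 h2 h3
    rw [h1, Pi.sub_apply, h2, h3]
    by_cases hx : x ∈ A <;> simp [g, hx]


/-- Lower `ℓ¹` estimate from almost disjointly concentrated functions. -/
theorem lower_l1 {Ω : Type*} [MeasurableSpace Ω] (μ : Measure Ω)
    (f : ℕ → Lp ℂ 1 μ) (E : ℕ → Set Ω) (hE : ∀ n, MeasurableSet (E n))
    (hd : Pairwise (Function.onFun Disjoint E)) (a b : ℝ)
    (ha : ∀ n, a ≤ ∫ x in E n, ‖f n x‖ ∂μ) (hb : ∀ n, ∫ x in ⋃ k, E k, ‖f n x‖ ∂μ ≤ b)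
    (n : ℕ) (α : Fin n → ℂ) :
    (2 * a - b) * ∑ k, ‖α k‖ ≤ ‖∑ k, α k • f k.1‖ := by
  have hfi : ∀ m, Integrable (f m) μ := fun m => L1.integrable_coeFn (f m)
  set F : Lp ℂ 1 μ := ∑ k, α k • f k.1 with hF
  have hFi : Integrable F μ := L1.integrable_coeFn F
  have hFe : F =ᵐ[μ] fun x => ∑ k, α k * f k.1 x := by
    have h1 : ∀ s : Finset (Fin n), (∑ k ∈ s, α k • f k.1 : Lp ℂ 1 μ) =ᵐ[μ]
        fun x => ∑ k ∈ s, (α k • f k.1 : Lp ℂ 1 μ) x := by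
      intro s
      exact Lp.coeFn_fun_finsetSum s _
    have h2 : ∀ᵐ x ∂μ, ∀ k : Fin n, (α k • f k.1 : Lp ℂ 1 μ) x = α k * f k.1 x := by
      rw [ae_all_iff]
      intro k
      filter_upwards [Lp.coeFn_smul (α k) (f k.1)] with x hx
      simpa using hx
    filter_upwards [h1 Finset.univ, h2] with x h1 h2
    rw [hF, h1]
    simp [h2]
  have hdF : Pairwise (Function.onFun Disjoint fun k : Fin n => E k.1) :=
    fun i j hij => hd (fun h => hij (Fin.ext h))
  -- matrix of masses
  let I : ℕ → ℕ → ℝ := fun k j => ∫ x in E k, ‖f j x‖ ∂μ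
  have hI0 : ∀ k j, 0 ≤ I k j := fun k j => integral_nonneg fun x => norm_nonneg _
  have hIsum : ∀ j, ∑ k : Fin n, I k j ≤ b := by
    intro j
    have h1 : ∑ k : Fin n, I k j = ∫ x in ⋃ k : Fin n, E k.1, ‖f j x‖ ∂μ := by
      rw [integral_iUnion_fintype (fun k => hE _) hdF (fun k => (hfi j).norm.integrableOn)]
    rw [h1]
    refine le_trans (setIntegral_mono_set (hfi j).norm.integrableOn
      (Filter.Eventually.of_forall fun x => norm_nonneg _) ?_) (hb j)
    exact Filter.Eventually.of_forall
      (Set.iUnion_subset fun k => Set.subset_iUnion E k.1)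
  have hsumi : ∀ k : Fin n, Integrable (fun x => ∑ j : Fin n, ‖α j‖ * ‖f j x‖) μ :=
    fun k => integrable_finsetSum _ fun j _ => (hfi j.1).norm.const_mul _
  have hk : ∀ k : Fin n, 2 * (‖α k‖ * I k k) - ∑ j : Fin n, ‖α j‖ * I k j ≤
      ∫ x in E k, ‖F x‖ ∂μ := by
    intro k
    have h1 : 2 * (‖α k‖ * I k k) - ∑ j : Fin n, ‖α j‖ * I k j =
        ∫ x in E k, (2 * (‖α k‖ * ‖f k x‖) - ∑ j : Fin n, ‖α j‖ * ‖f j x‖) ∂μ := by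
      rw [integral_sub, integral_finsetSum]
      · simp only [integral_const_mul]; rfl
      · intro j _
        exact ((hfi j).norm.const_mul _).integrableOn
      · exact (((hfi k).norm.const_mul _).const_mul _).integrableOn
      · exact (hsumi k).integrableOn
    rw [h1]
    apply integral_mono_ae
    · exact ((((hfi k).norm.const_mul _).const_mul _).sub
        (hsumi k)).integrableOn
    · exact hFi.norm.integrableOn
    · apply ae_restrict_of_ae
      filter_upwards [hFe] with x hx
      rw [hx]
      rw [← Finset.add_sum_erase _ (fun j : Fin n => α j * f j x) (Finset.mem_univ k),
        ← Finset.add_sum_erase _ (fun j : Fin n => ‖α j‖ * ‖f j x‖) (Finset.mem_univ k)]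
      have h2 := norm_sum_le (Finset.univ.erase k) (fun j : Fin n => α j * f j x)
      have h3 := norm_sub_le (α k * f k x + ∑ j ∈ Finset.univ.erase k, α j * f j x)
        (∑ j ∈ Finset.univ.erase k, α j * f j x)
      rw [add_sub_cancel_right] at h3
      simp only [norm_mul] at h2 h3
      linarith
  have hsumF : ∑ k : Fin n, ∫ x in E k, ‖F x‖ ∂μ ≤ ‖F‖ := by
    rw [L1.norm_eq_integral_norm,
      ← integral_iUnion_fintype (fun k => hE _) hdF (fun k => hFi.norm.integrableOn)]
    exact setIntegral_le_integral hFi.norm (Filter.Eventually.of_forall fun x => norm_nonneg _)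
  refine le_trans ?_ ((Finset.sum_le_sum fun k _ => hk k).trans hsumF)
  rw [Finset.sum_sub_distrib, Finset.sum_comm, ← Finset.sum_sub_distrib, Finset.mul_sum]
  apply Finset.sum_le_sum
  intro k _
  rw [← Finset.mul_sum]
  have h1 := mul_le_mul_of_nonneg_left (hIsum k) (norm_nonneg (α k))
  have h2 := mul_le_mul_of_nonneg_left (ha k) (norm_nonneg (α k))
  change _ ≤ 2 * (‖α k‖ * I k k) - ‖α k‖ * ∑ i : Fin n, I i k
  have h3 : ‖α k‖ * a ≤ ‖α k‖ * I k k := h2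
  linarith

theorem hump {Ω : Type*} [MeasurableSpace Ω] (μ : Measure Ω) [IsFiniteMeasure μ]
    (K : Set (Lp ℂ 1 μ)) (C : ℝ) (hC : ∀ f ∈ K, ‖f‖ ≤ C) (ε : ℝ) (hε : 0 < ε)
    (hnot : ∀ δ > 0, ∃ f ∈ K, ∃ A, MeasurableSet A ∧ μ.real A ≤ δ ∧
      ε < ∫ x in A, ‖f x‖ ∂μ) :
    ∃ f : ℕ → Lp ℂ 1 μ, (∀ n, f n ∈ K) ∧ ∃ c > 0, ∀ (n : ℕ) (α : Fin n → ℂ),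
      c * ∑ k, ‖α k‖ ≤ ‖∑ k, α k • f k.1‖ := by
  have hfi : ∀ f : Lp ℂ 1 μ, Integrable f μ := fun f => L1.integrable_coeFn f
  let P : ℝ → Set ℝ := fun δ => {r | ∃ f ∈ K, ∃ A, MeasurableSet A ∧ μ.real A ≤ δ ∧
    ∫ x in A, ‖f x‖ ∂μ = r}
  have hPb : ∀ δ, BddAbove (P δ) := by
    intro δ
    refine ⟨C, ?_⟩
    rintro _ ⟨f, hf, A, hA, -, rfl⟩
    refine le_trans ?_ (hC f hf)
    rw [L1.norm_eq_integral_norm]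
    exact setIntegral_le_integral (hfi f).norm
      (Filter.Eventually.of_forall fun x => norm_nonneg _)
  let m : ℝ → ℝ := fun δ => sSup (P δ)
  have hm : ∀ δ > 0, ε ≤ m δ := by
    intro δ hδ
    obtain ⟨f, hf, A, hA, hμ, hlt⟩ := hnot δ hδ
    exact hlt.le.trans (le_csSup (hPb δ) ⟨f, hf, A, hA, hμ, rfl⟩)
  let η : ℝ := sInf (m '' Set.Ioi 0)
  have hne : (m '' Set.Ioi 0).Nonempty := ⟨m 1, 1, by simp, rfl⟩
  have hεη : ε ≤ η := by
    apply le_csInf hne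
    rintro _ ⟨δ, hδ, rfl⟩
    exact hm δ hδ
  have hηm : ∀ δ > 0, η ≤ m δ := fun δ hδ =>
    csInf_le ⟨ε, by rintro _ ⟨δ, hδ, rfl⟩; exact hm δ hδ⟩ ⟨δ, hδ, rfl⟩
  let e : ℝ := η / 10
  have he : 0 < e := by simp only [e]; linarith
  obtain ⟨_, ⟨δ₀, hδ₀, rfl⟩, hm0⟩ := exists_lt_of_csInf_lt hne (show η < η + e by linarith)
  have hδ₀' : 0 < δ₀ := hδ₀
  have hup : ∀ f ∈ K, ∀ A, MeasurableSet A → μ.real A ≤ δ₀ → ∫ x in A, ‖f x‖ ∂μ ≤ η + e :=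
    fun f hf A hA hμ => (le_csSup (hPb δ₀) ⟨f, hf, A, hA, hμ, rfl⟩).trans hm0.le
  have hlo : ∀ δ : {δ : ℝ // 0 < δ}, ∃ f ∈ K, ∃ A, MeasurableSet A ∧ μ.real A ≤ δ.1 ∧
      η - e < ∫ x in A, ‖f x‖ ∂μ := by
    rintro ⟨δ, hδ⟩
    obtain ⟨_, ⟨f, hf, A, hA, hμ, rfl⟩, hlt⟩ := exists_lt_of_lt_csSup
      (s := P δ) (b := η - e) (by
        obtain ⟨f, hf, A, hA, hμ, -⟩ := hnot δ hδ
        exact ⟨_, f, hf, A, hA, hμ, rfl⟩) (by have := hηm δ hδ; change _ < m δ; linarith)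
    exact ⟨f, hf, A, hA, hμ, hlt⟩
  choose f hfK A hA hμA hfA using hlo
  have hac : ∀ δ : {δ : ℝ // 0 < δ}, ∃ δ' : {δ : ℝ // 0 < δ}, δ'.1 ≤ δ.1 / 2 ∧
      ∀ B, MeasurableSet B → μ.real B ≤ 2 * δ'.1 → ∫ x in B, ‖f δ x‖ ∂μ ≤ e := by
    intro δ
    have hfin : ∫⁻ x, ‖f δ x‖ₑ ∂μ ≠ ⊤ := (hfi (f δ)).2.ne
    obtain ⟨d, hd, hd'⟩ := exists_pos_setLIntegral_lt_of_measure_lt hfin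
      (ε := ENNReal.ofReal e) (by simpa using he)
    obtain ⟨r, hr0, hrd⟩ := ENNReal.lt_iff_exists_real_btwn.1 hd
    have hr : 0 < r := by simpa using hrd.1
    refine ⟨⟨min (δ.1 / 2) (r / 2), lt_min (half_pos δ.2) (half_pos hr)⟩, min_le_left _ _, ?_⟩
    intro B hB hμB
    have hBd : μ B < d := by
      refine lt_of_le_of_lt ?_ hrd.2
      rw [← ENNReal.ofReal_toReal (measure_ne_top μ B)]
      apply ENNReal.ofReal_le_ofReal
      have := min_le_right (δ.1 / 2) (r / 2)
      change μ.real B ≤ r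
      simp only at hμB
      linarith
    rw [integral_norm_eq_lintegral_enorm (hfi (f δ)).1.restrict]
    exact ENNReal.toReal_le_of_le_ofReal he.le (hd' B hBd).le
  choose g hg1 hg2 using hac
  let d : ℕ → {δ : ℝ // 0 < δ} := fun n => g^[n] ⟨δ₀ / 2, half_pos hδ₀'⟩
  have hdS : ∀ n, d (n+1) = g (d n) := fun n => Function.iterate_succ_apply' g n _
  have hgeo : ∀ n k, (d (n + k)).1 ≤ (d n).1 * (1/2)^k := by
    intro n k
    induction k with
    | zero => simp
    | succ k ih =>
      rw [← add_assoc, hdS, pow_succ]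
      have := hg1 (d (n+k))
      linarith
  have htail : ∀ n, μ.real (⋃ k, A (d (n + k))) ≤ 2 * (d n).1 := by
    intro n
    have hs : HasSum (fun k : ℕ => (d n).1 * (1/2:ℝ)^k) ((d n).1 * 2) :=
      hasSum_geometric_two.mul_left _
    have h1 : μ (⋃ k, A (d (n + k))) ≤ ENNReal.ofReal ((d n).1 * 2) := by
      refine (measure_iUnion_le _).trans ?_
      rw [← hs.tsum_eq, ENNReal.ofReal_tsum_of_nonneg (fun k => by have := (d n).2; positivity)
        hs.summable]
      apply ENNReal.tsum_le_tsum
      intro k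
      rw [← ENNReal.ofReal_toReal (measure_ne_top μ (A (d (n+k))))]
      exact ENNReal.ofReal_le_ofReal ((hμA _).trans (hgeo n k))
    have h2 := ENNReal.toReal_le_of_le_ofReal (by have := (d n).2; positivity) h1
    rw [mul_comm]; exact h2
  let U : ℕ → Set Ω := fun n => ⋃ k, A (d (n + 1 + k))
  have hU : ∀ n, MeasurableSet (U n) := fun n => MeasurableSet.iUnion fun k => hA _
  let E : ℕ → Set Ω := fun n => A (d n) \ U n
  have hE : ∀ n, MeasurableSet (E n) := fun n => (hA _).diff (hU n)
  have hlt : ∀ i j, i < j → Disjoint (E i) (E j) := by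
    intro i j hij
    rw [Set.disjoint_left]
    rintro x ⟨-, hx⟩ ⟨hx', -⟩
    apply hx
    refine Set.mem_iUnion.2 ⟨j - (i+1), ?_⟩
    rwa [show i + 1 + (j - (i+1)) = j by omega]
  have hdisj : Pairwise (Function.onFun Disjoint E) := by
    intro i j hij
    rcases lt_or_gt_of_ne hij with h | h
    · exact hlt i j h
    · exact (hlt j i h).symm
  refine ⟨fun n => f (d n), fun n => hfK _, 2 * (η - 2 * e) - (η + e), ?_, ?_⟩
  · simp only [e]; linarith
  intro n α
  refine lower_l1 μ (fun n => f (d n)) E hE hdisj (η - 2 * e) (η + e) ?_ ?_ n α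
  · intro n
    have h1 : ∫ x in U n, ‖f (d n) x‖ ∂μ ≤ e := by
      apply hg2 (d n) _ (hU n)
      rw [← hdS]
      exact htail (n+1)
    have h2 := hfA (d n)
    have h3 : ∫ x in A (d n), ‖f (d n) x‖ ∂μ ≤
        ∫ x in E n, ‖f (d n) x‖ ∂μ + ∫ x in U n, ‖f (d n) x‖ ∂μ := by
      rw [← setIntegral_union Set.disjoint_sdiff_left (hU n) (hfi _).norm.integrableOn
        (hfi _).norm.integrableOn]
      refine setIntegral_mono_set (hfi _).norm.integrableOn
        (Filter.Eventually.of_forall fun x => norm_nonneg _) (Filter.Eventually.of_forall ?_)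
      intro x hx
      by_cases hxU : x ∈ U n
      · exact Or.inr hxU
      · exact Or.inl ⟨hx, hxU⟩
    linarith
  · intro n
    apply hup _ (hfK _) _ (MeasurableSet.iUnion hE)
    have h1 := htail 0
    have h2 : (d 0).1 = δ₀ / 2 := rfl
    have h3 : μ.real (⋃ k, E k) ≤ μ.real (⋃ k, A (d (0 + k))) := by
      refine measureReal_mono ?_ (measure_ne_top _ _)
      apply Set.iUnion_mono
      intro k
      rw [zero_add]
      exact Set.sdiff_subset
    linarith

/-- Let `X` be a complex Banach space, `μ` a finite measure on `Ω`, and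
`T : X → L¹(μ)` a bounded linear operator. If `T` is not weakly compact (the image of the
closed unit ball is not relatively compact for the weak topology of `L¹(μ)`), then `T`
fixes a copy of `ℓ¹`: there are a sequence `{x_n}` in the closed unit ball of `X` and
`δ > 0` with `δ Σ|α_k| ≤ ‖T(Σ α_k x_k)‖` for all finitely many scalars `α₁, …, α_n`. -/
theorem stmt14 {X : Type*} [NormedAddCommGroup X] [NormedSpace ℂ X] [CompleteSpace X]
    {Ω : Type*} [MeasurableSpace Ω] (μ : Measure Ω) [IsFiniteMeasure μ]
    (T : X →L[ℂ] Lp ℂ 1 μ)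
    (hT : ¬ IsCompact (closure
      ((fun x => toWeakSpace ℂ (Lp ℂ 1 μ) (T x)) '' closedBall (0:X) 1))) :
    ∃ (x : ℕ → X) (δ : ℝ), 0 < δ ∧ (∀ n, x n ∈ closedBall (0:X) 1) ∧
      ∀ (n : ℕ) (α : Fin n → ℂ),
        δ * ∑ k : Fin n, ‖α k‖ ≤ ‖T (∑ k : Fin n, α k • x k.1)‖ := by
  have hC : ∀ f ∈ T '' closedBall (0:X) 1, ‖f‖ ≤ ‖T‖ := by
    rintro _ ⟨x, hx, rfl⟩
    exact T.unit_le_opNorm x (by simpa using hx)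
  rw [show (fun x => toWeakSpace ℂ (Lp ℂ 1 μ) (T x)) '' closedBall (0:X) 1 =
    toWeakSpace ℂ (Lp ℂ 1 μ) '' (T '' closedBall (0:X) 1) from
      (Set.image_image _ _ _).symm] at hT
  have hnui := mt (weak_compact_of_ui μ (T '' closedBall (0:X) 1) ‖T‖ hC) hT
  push Not at hnui
  obtain ⟨ε, hε, hnot⟩ := hnui
  obtain ⟨f, hf, c, hc, hest⟩ := hump μ (T '' closedBall (0:X) 1) ‖T‖ hC ε hε hnot
  choose x hx hxf using hf
  refine ⟨x, c, hc, hx, fun n α => ?_⟩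
  have h := hest n α
  simpa only [map_sum, map_smul, hxf] using h
end
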